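/- Let (G,w) be a 2-connected weighted graph with nowhere-zero real weights whose weighted vertex spanning-tree polynomial is real stable. Then the weight function w has constant sign on all edges of G. -/

import Mathlib

def RealStable {σ : Type*} (P : MvPolynomial σ ℝ) : Prop :=
  ∀ z : σ → ℂ, (∀ i, 0 < (z i).im) → MvPolynomial.aeval z P ≠ 0

open scoped Classical in
/-- The weighted vertex spanning-tree polynomial
`P_{G,w} = Σ_{T spanning tree of G} (Π_{e∈T} w(e)) · Π_v x_v^{deg_T(v)−1}`. -/
noncomputable def treePoly {V : Type*} [Fintype V] [DecidableEq V]
    (G : SimpleGraph V) (w : Sym2 V → ℝ) : MvPolynomial V ℝ :=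
  ∑ T ∈ Finset.univ.filter (fun T : SimpleGraph V => T ≤ G ∧ T.IsTree),
    MvPolynomial.C (∏ e ∈ T.edgeFinset, w e) *
      ∏ v, MvPolynomial.X v ^ (T.degree v - 1)

/-!
Setting `x_u = 0` kills the terms of the spanning trees in which `u` is not a leaf, and the
remaining trees are a spanning tree of `G - u` together with one edge at `u`, so
`P_G |_{x_u = 0} = (∑_{v ~ u} w(uv) x_v) * P_{G - u}`. This is nonzero because `G - u` is
connected, so by Hurwitz's theorem it is real stable together with `P_G`. A real linear form is real
stable only if its coefficients have one sign, so `w` has constant sign on the edges at each vertex,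
and therefore on the edges of the connected graph `G`.
-/

open MvPolynomial Filter Topology

section Hurwitz

theorem norm_eval_le_of_le_norm_roots {K : Type*} [NormedField K] {p : Polynomial K}
    (hp : p.Splits) {r : ℝ} (hr : 0 < r) (hroots : ∀ a ∈ p.roots, r ≤ ‖a‖) (x : K) :
    ‖p.eval x‖ ≤ ‖p.eval 0‖ * (1 + ‖x‖ / r) ^ p.natDegree := by
  have hfactor : ∀ a ∈ p.roots, ‖x - a‖ ≤ ‖0 - a‖ * (1 + ‖x‖ / r) := by
    intro a ha
    have hx : ‖x‖ ≤ ‖a‖ * (‖x‖ / r) := by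
      rw [← mul_div_assoc, le_div_iff₀ hr, mul_comm]
      exact mul_le_mul_of_nonneg_right (hroots a ha) (norm_nonneg x)
    calc ‖x - a‖ ≤ ‖x‖ + ‖a‖ := norm_sub_le x a
      _ ≤ ‖a‖ * (‖x‖ / r) + ‖a‖ := by gcongr
      _ = ‖0 - a‖ * (1 + ‖x‖ / r) := by rw [zero_sub, norm_neg]; ring
  have norm_eval (y : K) :
      ‖p.eval y‖ = ‖p.leadingCoeff‖ * (p.roots.map fun a => ‖y - a‖).prod := by
    rw [hp.eval_eq_prod_roots, norm_mul]
    exact congrArg _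
      ((map_multiset_prod (normHom (α := K)) _).trans (congrArg _ (Multiset.map_map ..)))
  calc ‖p.eval x‖
      = ‖p.leadingCoeff‖ * (p.roots.map fun a => ‖x - a‖).prod := norm_eval x
    _ ≤ ‖p.leadingCoeff‖ * (p.roots.map fun a => ‖0 - a‖ * (1 + ‖x‖ / r)).prod := by
        gcongr
        exact Multiset.prod_map_le_prod_map₀ _ _ (fun _ _ => norm_nonneg _) hfactor
    _ = ‖p.eval 0‖ * (1 + ‖x‖ / r) ^ p.natDegree := by
        rw [Multiset.prod_map_mul, Multiset.map_const', Multiset.prod_replicate,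
          ← hp.natDegree_eq_card_roots, ← mul_assoc, ← norm_eval]

/-- Hurwitz's theorem at the origin, for polynomials of bounded degree. -/
theorem eval_zero_ne_zero_of_tendsto {ι : Type*} {l : Filter ι} [l.NeBot]
    {p : ι → Polynomial ℂ} {q : Polynomial ℂ} {n : ℕ} {r : ℝ} (hr : 0 < r)
    (hdeg : ∀ t, (p t).natDegree ≤ n)
    (hlim : ∀ s, Tendsto (fun t => (p t).eval s) l (𝓝 (q.eval s)))
    (hp : ∀ᶠ t in l, ∀ s, ‖s‖ < r → (p t).eval s ≠ 0) (hq : q ≠ 0) : q.eval 0 ≠ 0 := by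
  intro hq0
  refine hq (Polynomial.funext fun x => ?_)
  have hbound : ∀ᶠ t in l, ‖(p t).eval x‖ ≤ ‖(p t).eval 0‖ * (1 + ‖x‖ / r) ^ n := by
    filter_upwards [hp] with t ht
    have hroots : ∀ a ∈ (p t).roots, r ≤ ‖a‖ := fun a ha =>
      not_lt.1 fun har => ht a har (Polynomial.isRoot_of_mem_roots ha)
    calc ‖(p t).eval x‖ ≤ ‖(p t).eval 0‖ * (1 + ‖x‖ / r) ^ (p t).natDegree :=
          norm_eval_le_of_le_norm_roots (IsAlgClosed.splits _) hr hroots x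
      _ ≤ ‖(p t).eval 0‖ * (1 + ‖x‖ / r) ^ n := by
          gcongr
          · exact le_add_of_nonneg_right (by positivity)
          · exact hdeg t
  have hle := le_of_tendsto_of_tendsto (hlim x).norm ((hlim 0).norm.mul_const _) hbound
  simpa [hq0] using hle

end Hurwitz

section Stable

variable {σ : Type*}

/-- The specialization `x_u = c` of a polynomial. The variable `x_u` no longer occurs in the result,
which is still regarded as a polynomial in all of `σ`. -/
noncomputable def specializeVar [DecidableEq σ] (u : σ) (c : ℝ) :
    MvPolynomial σ ℝ →ₐ[ℝ] MvPolynomial σ ℝ :=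
  bind₁ (Function.update X u (C c))

theorem aeval_specializeVar [DecidableEq σ] {A : Type*} [CommRing A] [Algebra ℝ A] (u : σ) (c : ℝ)
    (z : σ → A) (P : MvPolynomial σ ℝ) :
    aeval z (specializeVar u c P) = aeval (Function.update z u (algebraMap ℝ A c)) P := by
  rw [specializeVar, aeval_bind₁]
  congr 2
  ext i
  obtain rfl | hi := eq_or_ne i u
  · simp
  · simp [hi]

/-- The restriction of a real polynomial to the complex line `s ↦ a + s • d`. -/
noncomputable def restrictLine (P : MvPolynomial σ ℝ) (a d : σ → ℂ) : Polynomial ℂ :=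
  aeval (fun i => Polynomial.C (a i) + Polynomial.C (d i) * Polynomial.X) P

theorem eval_restrictLine (P : MvPolynomial σ ℝ) (a d : σ → ℂ) (s : ℂ) :
    (restrictLine P a d).eval s = aeval (a + s • d) P := by
  rw [restrictLine, ← Polynomial.coe_aeval_eq_eval,
    ← AlgHom.restrictScalars_apply ℝ (Polynomial.aeval s), comp_aeval_apply]
  congr 2
  ext i
  simp [mul_comm (d i)]

theorem natDegree_restrictLine_le (P : MvPolynomial σ ℝ) (a d : σ → ℂ) :
    (restrictLine P a d).natDegree ≤ P.totalDegree := by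
  rw [restrictLine, ← aeval_map_algebraMap ℂ]
  refine (aeval_natDegree_le _ (Finset.sup_mono (support_map_subset _ _)) _
    fun i => ?_).trans_eq (mul_one _)
  compute_degree

theorem continuous_aeval_complex (P : MvPolynomial σ ℝ) :
    Continuous fun z : σ → ℂ => aeval z P := by
  simp only [aeval_def, eval₂_eq_eval_map]
  exact continuous_eval _

theorem exists_aeval_complex_ne_zero {P : MvPolynomial σ ℝ} (hP : P ≠ 0) :
    ∃ z : σ → ℂ, aeval z P ≠ 0 := by
  by_contra! h
  refine hP (MvPolynomial.funext fun x => ?_)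
  simpa using (aeval_algebraMap_eq_zero_iff_of_injective ℂ
      (algebraMap ℝ ℂ).injective).1
    (h (algebraMap ℝ ℂ ∘ x))

theorem RealStable.of_mul_left {P Q : MvPolynomial σ ℝ} (h : RealStable (P * Q)) :
    RealStable P := by
  intro z hz hP
  exact h z hz (by rw [map_mul, hP, zero_mul])

/-- A zero `z` of the specialization would be a limit, as `t ↓ 0`, of zeros with `x_u = c + t i`;
Hurwitz's theorem is applied on the line joining `z` to a point where the specialization does not
vanish. -/
theorem RealStable.specializeVar [Finite σ] [DecidableEq σ] {P : MvPolynomial σ ℝ}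
    (hP : RealStable P) (u : σ) (c : ℝ) (hne : specializeVar u c P ≠ 0) :
    RealStable (specializeVar u c P) := by
  intro z hz
  obtain ⟨y, hy⟩ := exists_aeval_complex_ne_zero hne
  rw [aeval_specializeVar] at hy ⊢
  let base (t : ℝ) : σ → ℂ := Function.update z u (c + t * Complex.I)
  let dir : σ → ℂ := Function.update (y - z) u 0
  obtain ⟨r, hr, him⟩ : ∃ r > 0, ∀ s : ℂ, ‖s‖ < r → ∀ i, 0 < (z i + s * dir i).im := by
    have hnear : ∀ᶠ s : ℂ in 𝓝 0, ∀ i, 0 < (z i + s * dir i).im := by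
      refine eventually_all.2 fun i => ContinuousAt.eventually_lt ?_ ?_ ?_
      · fun_prop
      · fun_prop
      · simpa using hz i
    simpa using Metric.eventually_nhds_iff.1 hnear
  have hstable (t : ℝ) (ht : 0 < t) (s : ℂ) (hs : ‖s‖ < r) :
      (restrictLine P (base t) dir).eval s ≠ 0 := by
    rw [eval_restrictLine]
    refine hP _ fun i => ?_
    obtain rfl | hi := eq_or_ne i u
    · simpa [base, dir] using ht
    · simpa [base, hi] using him s hs i
  have hlim (s : ℂ) : Tendsto (fun t => (restrictLine P (base t) dir).eval s) (𝓝[>] 0)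
      (𝓝 ((restrictLine P (base 0) dir).eval s)) := by
    simp only [eval_restrictLine]
    have hbase : Continuous base := by fun_prop
    exact (((continuous_aeval_complex P).comp (hbase.add_const _)).tendsto 0).mono_left
      nhdsWithin_le_nhds
  have hq : restrictLine P (base 0) dir ≠ 0 := by
    have hend : base 0 + (1 : ℂ) • dir = Function.update y u c := by
      ext i
      obtain rfl | hi := eq_or_ne i u
      · simp [base, dir]
      · simp [base, dir, hi]
    intro h
    have heval := eval_restrictLine P (base 0) dir 1
    rw [h, hend, Polynomial.eval_zero] at heval
    exact hy heval.symm
  have hz0 := eval_zero_ne_zero_of_tendsto hr (fun t => natDegree_restrictLine_le P _ _) hlim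
    (eventually_mem_nhdsWithin.mono hstable) hq
  simpa [eval_restrictLine, base] using hz0

/-- The point is `1` plus corrections at `i` and `j` cancelling the negative and the positive part
of `∑ a`. -/
theorem exists_pos_sum_mul_eq_zero {s : Finset σ} {a : σ → ℝ} {i j : σ} (hi : i ∈ s) (hj : j ∈ s)
    (hai : 0 < a i) (haj : a j < 0) :
    ∃ c : σ → ℝ, (∀ v, 0 < c v) ∧ ∑ v ∈ s, a v * c v = 0 := by
  classical
  set S := ∑ v ∈ s, a v
  let c : σ → ℝ := 1 + Pi.single i (S⁻ / a i) + Pi.single j (S⁺ / -a j)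
  have hci : 0 ≤ Pi.single (M := fun _ : σ => ℝ) i (S⁻ / a i) :=
    Pi.single_nonneg.2 (div_nonneg (negPart_nonneg S) hai.le)
  have hcj : 0 ≤ Pi.single (M := fun _ : σ => ℝ) j (S⁺ / -a j) :=
    Pi.single_nonneg.2 (div_nonneg (posPart_nonneg S) (neg_pos.2 haj).le)
  refine ⟨c, fun v => ?_, ?_⟩
  · have := hci v
    have := hcj v
    simp only [c, Pi.add_apply, Pi.one_apply, Pi.zero_apply] at *
    linarith
  · calc ∑ v ∈ s, a v * c v = S + a i * (S⁻ / a i) + a j * (S⁺ / -a j) := by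
          simp [c, S, mul_add, Finset.sum_add_distrib, Pi.single_apply, hi, hj]
      _ = S + S⁻ - S⁺ := by field_simp [haj.ne]; ring
      _ = 0 := by linarith [posPart_sub_negPart S]

theorem RealStable.mul_nonneg_of_linear {s : Finset σ} {a : σ → ℝ}
    (h : RealStable (∑ v ∈ s, C (a v) * X v)) {i j : σ} (hi : i ∈ s) (hj : j ∈ s) :
    0 ≤ a i * a j := by
  by_contra! hneg
  obtain ⟨c, hc, hsum⟩ : ∃ c : σ → ℝ, (∀ v, 0 < c v) ∧ ∑ v ∈ s, a v * c v = 0 := by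
    rcases mul_neg_iff.1 hneg with ⟨hai, haj⟩ | ⟨hai, haj⟩
    · exact exists_pos_sum_mul_eq_zero hi hj hai haj
    · exact exists_pos_sum_mul_eq_zero hj hi haj hai
  refine h (fun v => c v * Complex.I) (by simpa using hc) ?_
  calc aeval (fun v => (c v : ℂ) * Complex.I) (∑ v ∈ s, C (a v) * X v)
      = ((∑ v ∈ s, a v * c v : ℝ) : ℂ) * Complex.I := by
        simp [Finset.sum_mul, mul_assoc]
    _ = 0 := by rw [hsum, Complex.ofReal_zero, zero_mul]

end Stable

section AddLeaf

variable {V : Type*} {u v : V}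

/-- The graph obtained from a graph on `V \ {u}` by attaching `u` as a leaf at `v ≠ u`. -/
def addLeaf (u v : V) (H : SimpleGraph {x | x ≠ u}) : SimpleGraph V :=
  H.spanningCoe ⊔ SimpleGraph.edge u v

theorem not_spanningCoe_adj (H : SimpleGraph {x | x ≠ u}) (b : V) : ¬H.spanningCoe.Adj u b := by
  rw [SimpleGraph.map_adj]
  rintro ⟨a, -, -, ha, -⟩
  exact a.2 ha

theorem addLeaf_adj_leaf (hv : v ≠ u) (H : SimpleGraph {x | x ≠ u}) {b : V} :
    (addLeaf u v H).Adj u b ↔ b = v := by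
  have := not_spanningCoe_adj H b
  grind [addLeaf]

theorem induce_addLeaf (H : SimpleGraph {x | x ≠ u}) :
    (addLeaf u v H).induce {x | x ≠ u} = H := by
  ext a b
  have ha : (a : V) ≠ u := a.2
  have hb : (b : V) ≠ u := b.2
  rw [SimpleGraph.induce_adj, addLeaf, SimpleGraph.sup_adj, ← SimpleGraph.induce_adj,
    SimpleGraph.induce_spanningCoe, SimpleGraph.edge_adj]
  tauto

theorem addLeaf_induce {T : SimpleGraph V} (hu : ∀ b, T.Adj u b ↔ b = v) :
    addLeaf u v (T.induce {x | x ≠ u}) = T := by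
  refine le_antisymm (sup_le (SimpleGraph.spanningCoe_induce_le _ _)
    ((SimpleGraph.edge_le_iff T).2 (.inr ((hu v).2 rfl)))) fun a b hab => ?_
  by_cases ha : a = u
  · grind [addLeaf, hab.ne]
  by_cases hb : b = u
  · grind [addLeaf, hab.ne, hab.symm]
  exact .inl ((SimpleGraph.map_adj ..).2 ⟨⟨a, ha⟩, ⟨b, hb⟩, hab, rfl, rfl⟩)

theorem addLeaf_le {G : SimpleGraph V} {H : SimpleGraph {x | x ≠ u}} (huv : G.Adj u v)
    (hH : H ≤ G.induce {x | x ≠ u}) : addLeaf u v H ≤ G :=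
  sup_le ((SimpleGraph.map_le_iff_le_comap (.subtype _) H G).2 hH)
    ((SimpleGraph.edge_le_iff G).2 (.inr huv))

theorem notMem_map_edgeFinset (H : SimpleGraph {x | x ≠ u}) [Fintype H.edgeSet] :
    s(u, v) ∉ H.edgeFinset.map (Function.Embedding.subtype _).sym2Map := by
  rw [← Finset.mem_coe, Finset.coe_map, SimpleGraph.coe_edgeFinset, ← SimpleGraph.edgeSet_map]
  exact not_spanningCoe_adj H v

theorem edgeFinset_addLeaf (hv : v ≠ u) (H : SimpleGraph {x | x ≠ u}) [Fintype H.edgeSet]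
    [Fintype (addLeaf u v H).edgeSet] :
    (addLeaf u v H).edgeFinset =
      (H.edgeFinset.map (Function.Embedding.subtype _).sym2Map).cons s(u, v)
        (notMem_map_edgeFinset H) := by
  rw [← Finset.coe_inj, Finset.coe_cons, Finset.coe_map, SimpleGraph.coe_edgeFinset,
    SimpleGraph.coe_edgeFinset, ← SimpleGraph.edgeSet_map, addLeaf, SimpleGraph.edgeSet_sup,
    SimpleGraph.edgeSet_edge_of_ne hv.symm, Set.union_singleton]

theorem degree_induce_ne_add (G : SimpleGraph V) (a : {x | x ≠ u})
    [Decidable (G.Adj a u)] [Fintype (G.neighborSet a)]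
    [Fintype ((G.induce {x | x ≠ u}).neighborSet a)] :
    (G.induce {x | x ≠ u}).degree a + (if G.Adj a u then 1 else 0) = G.degree a := by
  classical
  have hmap : ((G.induce {x | x ≠ u}).neighborFinset a).map (.subtype _) =
      (G.neighborFinset a).erase u := by
    ext b
    simp [and_comm]
  rw [← SimpleGraph.card_neighborFinset_eq_degree, ← SimpleGraph.card_neighborFinset_eq_degree,
    ← Finset.card_map, hmap]
  split_ifs with h
  · rw [Finset.card_erase_add_one (by simpa using h)]
  · rw [Finset.erase_eq_of_notMem (by simpa using h), add_zero]

theorem degree_addLeaf [DecidableEq V] (hv : v ≠ u) (H : SimpleGraph {x | x ≠ u}) (a : {x | x ≠ u})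
    [Fintype ((addLeaf u v H).neighborSet a)] [Fintype (H.neighborSet a)] :
    (addLeaf u v H).degree a = H.degree a + if (a : V) = v then 1 else 0 := by
  classical
  have : Fintype (((addLeaf u v H).induce {x | x ≠ u}).neighborSet a) := by
    rw [induce_addLeaf]
    infer_instance
  rw [← degree_induce_ne_add]
  simp only [SimpleGraph.adj_comm _ _ u, addLeaf_adj_leaf hv]
  congr!
  exact induce_addLeaf H

theorem degree_addLeaf_leaf (hv : v ≠ u) (H : SimpleGraph {x | x ≠ u})
    [Fintype ((addLeaf u v H).neighborSet u)] : (addLeaf u v H).degree u = 1 := by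
  simp only [SimpleGraph.degree_eq_one_iff_existsUnique_adj, addLeaf_adj_leaf hv, existsUnique_eq]

theorem isTree_addLeaf [Finite V] (hv : v ≠ u) {H : SimpleGraph {x | x ≠ u}} (hH : H.IsTree) :
    (addLeaf u v H).IsTree := by
  classical
  have := Fintype.ofFinite V
  rw [SimpleGraph.isTree_iff_connected_and_card] at hH ⊢
  constructor
  · let incl : H →g addLeaf u v H :=
      (SimpleGraph.Hom.ofLE le_sup_left).comp (SimpleGraph.Embedding.map (.subtype _) H).toHom
    refine (SimpleGraph.connected_iff_exists_forall_reachable _).2 ⟨v, fun x => ?_⟩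
    obtain rfl | hx := eq_or_ne x u
    · exact ((addLeaf_adj_leaf hv H).2 rfl).symm.reachable
    · exact (hH.1.preconnected ⟨v, hv⟩ ⟨x, hx⟩).map incl
  · have hverts : Nat.card {x | x ≠ u} + 1 = Nat.card V := by
      have := Fintype.card_pos_iff.2 ⟨u⟩
      rw [Nat.card_eq_fintype_card, Nat.card_eq_fintype_card, Set.card_ne_eq]
      omega
    rw [Nat.card_eq_fintype_card, ← SimpleGraph.edgeFinset_card] at hH ⊢
    rw [edgeFinset_addLeaf hv, Finset.card_cons, Finset.card_map, hH.2, hverts]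

end AddLeaf

section TreePoly

variable {V : Type*} [Fintype V]

open scoped Classical in
/-- The summand of `treePoly` contributed by the spanning tree `T`. -/
noncomputable def treeTerm (w : Sym2 V → ℝ) (T : SimpleGraph V) : MvPolynomial V ℝ :=
  C (∏ e ∈ T.edgeFinset, w e) * ∏ v, X v ^ (T.degree v - 1)

theorem treeTerm_ne_zero {T : SimpleGraph V} {w : Sym2 V → ℝ} (hw : ∀ e ∈ T.edgeSet, w e ≠ 0) :
    treeTerm w T ≠ 0 := by
  classical
  refine mul_ne_zero (C_ne_zero.2 <| Finset.prod_ne_zero_iff.2 fun e he => hw e ?_) ?_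
  · exact SimpleGraph.mem_edgeFinset.1 he
  · exact Finset.prod_ne_zero_iff.2 fun v _ => pow_ne_zero _ (X_ne_zero v)

open scoped Classical in
/-- The linear form `∑_{v ~ u} w(uv) x_v` of the star of `G` at `u`. -/
noncomputable def starForm (G : SimpleGraph V) (w : Sym2 V → ℝ) (u : V) : MvPolynomial V ℝ :=
  ∑ v with G.Adj u v, C (w s(u, v)) * X v

theorem starForm_ne_zero {G : SimpleGraph V} {w : Sym2 V → ℝ} (hw : ∀ e ∈ G.edgeSet, w e ≠ 0)
    {u v : V} (huv : G.Adj u v) : starForm G w u ≠ 0 := by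
  classical
  have heval : eval (Pi.single v 1) (starForm G w u) = w s(u, v) := by
    simp [starForm, Pi.single_apply, huv]
  exact fun h => hw s(u, v) huv (by rw [← heval, h, map_zero])

variable [DecidableEq V]

open scoped Classical in
theorem treePoly_eq_sum_treeTerm (G : SimpleGraph V) (w : Sym2 V → ℝ) :
    treePoly G w = ∑ T : SimpleGraph V with T ≤ G ∧ T.IsTree, treeTerm w T :=
  rfl

open scoped Classical in
theorem specializeVar_treeTerm (w : Sym2 V → ℝ) (T : SimpleGraph V) (u : V) :
    specializeVar u 0 (treeTerm w T) = C (∏ e ∈ T.edgeFinset, w e) *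
      (0 ^ (T.degree u - 1) * ∏ a : {x | x ≠ u}, X (a : V) ^ (T.degree a - 1)) := by
  rw [treeTerm, specializeVar, map_mul, bind₁_C_right]
  simp_rw [map_prod _ _ Finset.univ, map_pow, bind₁_X_right]
  rw [Fintype.prod_eq_mul_prod_subtype_ne _ u, Function.update_self, map_zero]
  congr! 4 with a
  exact Function.update_of_ne a.2 0 X

open scoped Classical in
theorem specializeVar_treeTerm_of_one_lt_degree (w : Sym2 V → ℝ) {T : SimpleGraph V} {u : V}
    (hu : 1 < T.degree u) : specializeVar u 0 (treeTerm w T) = 0 := by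
  rw [specializeVar_treeTerm, zero_pow (Nat.sub_ne_zero_of_lt hu), zero_mul, mul_zero]

theorem specializeVar_treeTerm_addLeaf (w : Sym2 V → ℝ) {u v : V} (hv : v ≠ u)
    [Nontrivial {x | x ≠ u}] {H : SimpleGraph {x | x ≠ u}} (hH : H.Preconnected) :
    specializeVar u 0 (treeTerm w (addLeaf u v H)) =
      C (w s(u, v)) * X v * rename Subtype.val (treeTerm (w ∘ Sym2.map Subtype.val) H) := by
  classical
  have hexp (a : {x | x ≠ u}) :
      (addLeaf u v H).degree a - 1 = H.degree a - 1 + if a = ⟨v, hv⟩ then 1 else 0 := by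
    have := hH.degree_pos_of_nontrivial a
    rw [degree_addLeaf hv, Nat.sub_add_comm this]
    simp only [Subtype.ext_iff]
  have hleaf : ∏ a : {x | x ≠ u}, X (R := ℝ) (a : V) ^ (if a = ⟨v, hv⟩ then 1 else 0) = X v := by
    simp
  rw [specializeVar_treeTerm, degree_addLeaf_leaf hv, edgeFinset_addLeaf hv, Finset.prod_cons,
    Finset.prod_map, Nat.sub_self, pow_zero, one_mul]
  simp_rw [hexp, pow_add, Finset.prod_mul_distrib, hleaf, treeTerm, map_mul, rename_C,
    map_prod _ _ Finset.univ, map_pow, rename_X]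
  simp only [Function.Embedding.sym2Map_apply, Function.Embedding.coe_subtype, Function.comp_apply]
  ring

open scoped Classical in
theorem sum_isTree_degree_eq_one {M : Type*} [AddCommMonoid M] (G : SimpleGraph V) (u : V)
    (f : SimpleGraph V → M) :
    ∑ T : SimpleGraph V with (T ≤ G ∧ T.IsTree) ∧ T.degree u = 1, f T =
      ∑ v with G.Adj u v, ∑ H : SimpleGraph {x | x ≠ u} with H ≤ G.induce {x | x ≠ u} ∧ H.IsTree,
        f (addLeaf u v H) := by
  rw [← Finset.sum_product']
  symm
  refine Finset.sum_bij (fun p _ => addLeaf u p.1 p.2) ?maps ?injective ?surjective fun _ _ => rfl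
  all_goals simp only [Finset.mem_product, Finset.mem_filter_univ, Prod.forall, Prod.mk.injEq]
  case maps =>
    rintro v H ⟨huv, hle, hH⟩
    exact ⟨⟨addLeaf_le huv hle, isTree_addLeaf huv.ne' hH⟩, degree_addLeaf_leaf huv.ne' H⟩
  case injective =>
    rintro v H ⟨huv, -⟩ v' H' ⟨huv', -⟩ heq
    constructor
    · rw [← addLeaf_adj_leaf huv'.ne' H', ← heq, addLeaf_adj_leaf huv.ne']
    · rw [← induce_addLeaf (v := v) H, heq, induce_addLeaf]
  case surjective =>
    rintro T ⟨⟨hle, hT⟩, hdeg⟩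
    obtain ⟨v, huv, hv⟩ := SimpleGraph.degree_eq_one_iff_existsUnique_adj.1 hdeg
    have hT' : (T.induce {x | x ≠ u}).IsTree :=
      ⟨hT.connected.induce_compl_singleton_of_degree_eq_one hdeg, hT.isAcyclic.induce _⟩
    exact ⟨(v, T.induce {x | x ≠ u}),
      by simpa using ⟨hle huv, SimpleGraph.comap_monotone _ hle, hT'⟩,
      addLeaf_induce fun b => ⟨hv b, fun hb => hb ▸ huv⟩⟩

theorem specializeVar_treePoly (G : SimpleGraph V) (w : Sym2 V → ℝ) (u : V)
    [Nontrivial {x | x ≠ u}] :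
    specializeVar u 0 (treePoly G w) = starForm G w u *
      rename Subtype.val (treePoly (G.induce {x | x ≠ u}) (w ∘ Sym2.map Subtype.val)) := by
  classical
  have : Nontrivial V := (Subtype.val_injective (p := (· ∈ {x | x ≠ u}))).nontrivial
  have hdeg : ∀ T ∈ ({T | T ≤ G ∧ T.IsTree} : Finset (SimpleGraph V)),
      specializeVar u 0 (treeTerm w T) ≠ 0 → T.degree u = 1 := by
    intro T hT hne
    rw [Finset.mem_filter_univ] at hT
    have hpos := hT.2.connected.preconnected.degree_pos_of_nontrivial u
    exact le_antisymm (not_lt.1 fun h => hne (specializeVar_treeTerm_of_one_lt_degree w h)) hpos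
  rw [treePoly_eq_sum_treeTerm, map_sum, ← Finset.sum_filter_of_ne hdeg, Finset.filter_filter,
    sum_isTree_degree_eq_one, starForm, treePoly_eq_sum_treeTerm, map_sum, Finset.sum_mul_sum]
  refine Finset.sum_congr rfl fun v hv => Finset.sum_congr rfl fun H hH => ?_
  rw [Finset.mem_filter_univ] at hv hH
  exact specializeVar_treeTerm_addLeaf w hv.ne' hH.2.connected.preconnected

theorem treePoly_of_isTree {T : SimpleGraph V} (hT : T.IsTree) (w : Sym2 V → ℝ) :
    treePoly T w = treeTerm w T := by
  classical
  have hfilter : ({T' | T' ≤ T ∧ T'.IsTree} : Finset (SimpleGraph V)) = {T} := by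
    ext T'
    simp only [Finset.mem_filter_univ, Finset.mem_singleton]
    refine ⟨fun h => ?_, fun h => by rw [h]; exact ⟨le_rfl, hT⟩⟩
    exact (SimpleGraph.isTree_iff_minimal_connected.1 hT).eq_of_le h.2.connected h.1
  rw [treePoly_eq_sum_treeTerm, hfilter, Finset.sum_singleton]

theorem specializeVar_treePoly_ne_zero {G : SimpleGraph V} {w : Sym2 V → ℝ} {u v : V}
    [Nontrivial {x | x ≠ u}] (hw : ∀ e ∈ G.edgeSet, w e ≠ 0) (huv : G.Adj u v)
    (hne : treePoly (G.induce {x | x ≠ u}) (w ∘ Sym2.map Subtype.val) ≠ 0) :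
    specializeVar u 0 (treePoly G w) ≠ 0 := by
  rw [specializeVar_treePoly]
  refine mul_ne_zero (starForm_ne_zero hw huv) ?_
  rw [← map_zero (rename Subtype.val)]
  exact (rename_injective _ Subtype.val_injective).ne hne

end TreePoly

theorem forall_mem_edgeSet_induce_ne_zero {V M : Type*} [Zero M] {G : SimpleGraph V}
    {w : Sym2 V → M} {s : Set V} (hw : ∀ e ∈ G.edgeSet, w e ≠ 0) :
    ∀ e ∈ (G.induce s).edgeSet, (w ∘ Sym2.map Subtype.val) e ≠ 0 :=
  fun _ he => hw _ ((SimpleGraph.Embedding.induce s).map_mem_edgeSet_iff.2 he)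

theorem treePoly_ne_zero {V : Type*} [Fintype V] [DecidableEq V] {G : SimpleGraph V}
    {w : Sym2 V → ℝ} (hG : G.Connected) (hw : ∀ e ∈ G.edgeSet, w e ≠ 0) : treePoly G w ≠ 0 := by
  induction hn : Fintype.card V generalizing V with
  | zero => exact absurd hn (Fintype.card_pos_iff.2 hG.nonempty).ne'
  | succ n ih =>
  obtain hcard | hcard := le_or_gt (Fintype.card V) 2
  · have hT : G.IsTree := ⟨hG, .of_card_le_two (by simpa using hcard)⟩
    rw [treePoly_of_isTree hT]
    exact treeTerm_ne_zero hw
  · have : Nontrivial V := Fintype.one_lt_card_iff_nontrivial.1 (by omega)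
    obtain ⟨u, hu⟩ := hG.exists_connected_induce_compl_singleton_of_finite_nontrivial
    have hcard' : Fintype.card {x | x ≠ u} = n := by rw [Set.card_ne_eq, hn, Nat.add_sub_cancel]
    have : Nontrivial {x | x ≠ u} := Fintype.one_lt_card_iff_nontrivial.1 (by omega)
    obtain ⟨v, huv⟩ := hG.preconnected.exists_adj_of_nontrivial u
    have hne : specializeVar u 0 (treePoly G w) ≠ 0 :=
      specializeVar_treePoly_ne_zero hw huv (ih hu (forall_mem_edgeSet_induce_ne_zero hw) hcard')
    exact fun h => hne (by rw [h, map_zero])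

theorem mul_pos_of_realStable_treePoly {V : Type*} [Fintype V] [DecidableEq V] {G : SimpleGraph V}
    {w : Sym2 V → ℝ} {u : V} [Nontrivial {x | x ≠ u}] (hw : ∀ e ∈ G.edgeSet, w e ≠ 0)
    (hu : (G.induce {x | x ≠ u}).Connected) (hstab : RealStable (treePoly G w)) {a b : V}
    (ha : G.Adj u a) (hb : G.Adj u b) : 0 < w s(u, a) * w s(u, b) := by
  have hne : specializeVar u 0 (treePoly G w) ≠ 0 :=
    specializeVar_treePoly_ne_zero hw ha
      (treePoly_ne_zero hu (forall_mem_edgeSet_induce_ne_zero hw))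
  have hstar : RealStable (starForm G w u) := by
    have hface := hstab.specializeVar u 0 hne
    rw [specializeVar_treePoly] at hface
    exact hface.of_mul_left
  have hnonneg : 0 ≤ w s(u, a) * w s(u, b) :=
    hstar.mul_nonneg_of_linear (by simpa using ha) (by simpa using hb)
  exact hnonneg.lt_of_ne' (mul_ne_zero (hw _ ha) (hw _ hb))

theorem forall_mem_edgeSet_of_forall_incident {V : Type*} {G : SimpleGraph V} (hG : G.Preconnected)
    {p : Sym2 V → Prop} (hp : ∀ u a b, G.Adj u a → G.Adj u b → p s(u, a) → p s(u, b))
    {e : Sym2 V} (he : e ∈ G.edgeSet) (hpe : p e) : ∀ f ∈ G.edgeSet, p f := by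
  intro f hf
  induction e with | _ a a' =>
  induction f with | _ b b' =>
  obtain ⟨walk⟩ := hG a b
  induction walk generalizing a' with
  | nil => exact hp _ _ _ he hf hpe
  | cons h _ ih =>
    refine ih _ h.symm ?_ hf
    rw [Sym2.eq_swap]
    exact hp _ _ _ he h hpe

/-- Let `(G,w)` be a 2-connected weighted graph (connected, at least 3
vertices, and still connected after deleting any single vertex) with
nowhere-zero real edge weights, whose weighted vertex spanning-tree polynomial
is real stable. Then `w` has constant sign on the edges of `G`. -/
theorem stmt_15 {V : Type*} [Fintype V] [DecidableEq V] (G : SimpleGraph V)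
    (w : Sym2 V → ℝ)
    (hcard : 3 ≤ Fintype.card V) (hconn : G.Connected)
    (h2conn : ∀ v : V, (G.induce {u | u ≠ v}).Connected)
    (hw : ∀ e ∈ G.edgeSet, w e ≠ 0)
    (hstab : RealStable (treePoly G w)) :
    (∀ e ∈ G.edgeSet, 0 < w e) ∨ (∀ e ∈ G.edgeSet, w e < 0) := by
  have hpos_incident (u a b : V) (ha : G.Adj u a) (hb : G.Adj u b) (hpos : 0 < w s(u, a)) :
      0 < w s(u, b) := by
    have : Nontrivial {x | x ≠ u} :=
      Fintype.one_lt_card_iff_nontrivial.1 (by rw [Set.card_ne_eq]; omega)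
    exact (mul_pos_iff_of_pos_left hpos).1
      (mul_pos_of_realStable_treePoly hw (h2conn u) hstab ha hb)
  by_cases h : ∃ e ∈ G.edgeSet, 0 < w e
  · obtain ⟨e, he, hpos⟩ := h
    exact .inl (forall_mem_edgeSet_of_forall_incident hconn.preconnected hpos_incident he hpos)
  · push Not at h
    exact .inr fun e he => (h e he).lt_of_ne (hw e he)
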